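/- Let I_non be a nonlinearity interval such that for every ε ∈ I_non a strictly complementary optimal solution of (P_ε) and (D_ε) exists, and let ε̄ ∈ int(E) be a boundary point of I_non. Suppose that for every sequence {ε_k} ⊆ int(E) with ε_k → ε̄ there exists a sequence of optimal solutions (X(ε_k), y(ε_k), S(ε_k)) converging to a maximally complementary solution (X*(ε̄), y*(ε̄), S*(ε̄)) at ε̄. Then no strictly complementary optimal solution exists at ε̄, and for every ξ > 0 and every ε ∈ (ε̄−ξ, ε̄+ξ) ∩ I_non one has dim B(ε) ≠ dim B(ε̄) or dim N(ε) ≠ dim N(ε̄). -/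

import Mathlib

open Matrix Set

noncomputable section

variable {n m : ℕ}

/-- Feasibility for the primal SDO problem `(P_ε)` (the feasible set does not depend on `ε`). -/
def PrimalFeasible (A : Fin m → Matrix (Fin n) (Fin n) ℝ) (b : Fin m → ℝ)
    (X : Matrix (Fin n) (Fin n) ℝ) : Prop :=
  X.IsSymm ∧ (∀ i, ((A i) * X).trace = b i) ∧ X.PosSemidef

/-- Feasibility for the dual SDO problem `(D_ε)`. -/
def DualFeasible (C Cbar : Matrix (Fin n) (Fin n) ℝ)
    (A : Fin m → Matrix (Fin n) (Fin n) ℝ) (ε : ℝ)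
    (y : Fin m → ℝ) (S : Matrix (Fin n) (Fin n) ℝ) : Prop :=
  S.IsSymm ∧ (∑ i, y i • A i) + S = C + ε • Cbar ∧ S.PosSemidef

/-- The optimal value function `v(ε)` of `(P_ε)`, with values in `EReal`. -/
def vfun (C Cbar : Matrix (Fin n) (Fin n) ℝ) (A : Fin m → Matrix (Fin n) (Fin n) ℝ)
    (b : Fin m → ℝ) (ε : ℝ) : EReal :=
  sInf ((fun X => (((C + ε • Cbar) * X).trace : EReal)) '' {X | PrimalFeasible A b X})

/-- `E = {ε : v(ε) > -∞}`. -/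
def Eset (C Cbar : Matrix (Fin n) (Fin n) ℝ) (A : Fin m → Matrix (Fin n) (Fin n) ℝ)
    (b : Fin m → ℝ) : Set ℝ :=
  {ε | ⊥ < vfun C Cbar A b ε}

/-- The primal optimal set `P*(ε)`. -/
def PrimalOpt (C Cbar : Matrix (Fin n) (Fin n) ℝ) (A : Fin m → Matrix (Fin n) (Fin n) ℝ)
    (b : Fin m → ℝ) (ε : ℝ) : Set (Matrix (Fin n) (Fin n) ℝ) :=
  {X | PrimalFeasible A b X ∧ ∀ X', PrimalFeasible A b X' →
    ((C + ε • Cbar) * X).trace ≤ ((C + ε • Cbar) * X').trace}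

/-- The dual optimal set `D*(ε)`. -/
def DualOpt (C Cbar : Matrix (Fin n) (Fin n) ℝ) (A : Fin m → Matrix (Fin n) (Fin n) ℝ)
    (b : Fin m → ℝ) (ε : ℝ) : Set ((Fin m → ℝ) × Matrix (Fin n) (Fin n) ℝ) :=
  {p | DualFeasible C Cbar A ε p.1 p.2 ∧ ∀ y' S', DualFeasible C Cbar A ε y' S' →
    ∑ i, b i * y' i ≤ ∑ i, b i * p.1 i}

/-- A maximally complementary optimal solution: `X` lies in the relative interior of `P*(ε)`
and `(y, S)` in the relative interior of `D*(ε)`. -/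
def MaxComp (C Cbar : Matrix (Fin n) (Fin n) ℝ) (A : Fin m → Matrix (Fin n) (Fin n) ℝ)
    (b : Fin m → ℝ) (ε : ℝ) (X : Matrix (Fin n) (Fin n) ℝ) (y : Fin m → ℝ)
    (S : Matrix (Fin n) (Fin n) ℝ) : Prop :=
  X ∈ intrinsicInterior ℝ (PrimalOpt C Cbar A b ε) ∧
    (y, S) ∈ intrinsicInterior ℝ (DualOpt C Cbar A b ε)

/-- `π(ε) = π(ε')`: the optimal partitions at `ε` and `ε'` coincide, expressed through
maximally complementary solutions (`B = range X*`, `N = range S*`, `T` being determined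
by `B` and `N`). -/
def SamePartition (C Cbar : Matrix (Fin n) (Fin n) ℝ) (A : Fin m → Matrix (Fin n) (Fin n) ℝ)
    (b : Fin m → ℝ) (ε ε' : ℝ) : Prop :=
  ∃ X y S X' y' S', MaxComp C Cbar A b ε X y S ∧ MaxComp C Cbar A b ε' X' y' S' ∧
    LinearMap.range X.mulVecLin = LinearMap.range X'.mulVecLin ∧
    LinearMap.range S.mulVecLin = LinearMap.range S'.mulVecLin

/-- The standing assumptions: symmetric data, linearly independent constraint matrices and
the interior point condition at `ε = 0`. -/
def StandingAssumptions (C Cbar : Matrix (Fin n) (Fin n) ℝ)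
    (A : Fin m → Matrix (Fin n) (Fin n) ℝ) (b : Fin m → ℝ) : Prop :=
  C.IsSymm ∧ Cbar.IsSymm ∧ (∀ i, (A i).IsSymm) ∧ LinearIndependent ℝ A ∧
    ∃ X y S, PrimalFeasible A b X ∧ X.PosDef ∧ DualFeasible C Cbar A 0 y S ∧ S.PosDef

/-- The invariancy set of `ε̄`. -/
def InvSet (C Cbar : Matrix (Fin n) (Fin n) ℝ) (A : Fin m → Matrix (Fin n) (Fin n) ℝ)
    (b : Fin m → ℝ) (εbar : ℝ) : Set ℝ :=
  {ε | ε ∈ interior (Eset C Cbar A b) ∧ SamePartition C Cbar A b ε εbar}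

/-- `dim B(ε) = dim B(ε')` and `dim N(ε) = dim N(ε')`, expressed through maximally
complementary solutions. -/
def DimsMatch (C Cbar : Matrix (Fin n) (Fin n) ℝ) (A : Fin m → Matrix (Fin n) (Fin n) ℝ)
    (b : Fin m → ℝ) (ε ε' : ℝ) : Prop :=
  ∀ X y S X' y' S', MaxComp C Cbar A b ε X y S → MaxComp C Cbar A b ε' X' y' S' →
    Module.finrank ℝ (LinearMap.range X.mulVecLin) =
        Module.finrank ℝ (LinearMap.range X'.mulVecLin) ∧
      Module.finrank ℝ (LinearMap.range S.mulVecLin) =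
        Module.finrank ℝ (LinearMap.range S'.mulVecLin)

/-- A transition point: a singleton invariancy set such that every neighborhood contains a
parameter at which `dim B` or `dim N` differs. -/
def IsTransitionPoint (C Cbar : Matrix (Fin n) (Fin n) ℝ) (A : Fin m → Matrix (Fin n) (Fin n) ℝ)
    (b : Fin m → ℝ) (εbar : ℝ) : Prop :=
  εbar ∈ interior (Eset C Cbar A b) ∧
    (∀ ε ∈ interior (Eset C Cbar A b), ε ≠ εbar → ¬ SamePartition C Cbar A b ε εbar) ∧
    ∀ ξ : ℝ, 0 < ξ → ∃ ε ∈ Set.Ioo (εbar - ξ) (εbar + ξ) ∩ interior (Eset C Cbar A b),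
      ¬ DimsMatch C Cbar A b ε εbar

/-- Existence of a strictly complementary optimal solution at `ε`. -/
def HasStrictComp (C Cbar : Matrix (Fin n) (Fin n) ℝ) (A : Fin m → Matrix (Fin n) (Fin n) ℝ)
    (b : Fin m → ℝ) (ε : ℝ) : Prop :=
  ∃ X y S, X ∈ PrimalOpt C Cbar A b ε ∧ (y, S) ∈ DualOpt C Cbar A b ε ∧ (X + S).PosDef

/-- Nonsingularity of the Jacobian `J(X, y, S)` of the optimality system, as a linear map on
`S^n × ℝ^m × S^n`: only the trivial symmetric triple is mapped to zero. -/
def JNonsingular (A : Fin m → Matrix (Fin n) (Fin n) ℝ)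
    (X S : Matrix (Fin n) (Fin n) ℝ) : Prop :=
  ∀ (DX DS : Matrix (Fin n) (Fin n) ℝ) (Dy : Fin m → ℝ), DX.IsSymm → DS.IsSymm →
    (∀ i, ((A i) * DX).trace = 0) → ((∑ i, Dy i • A i) + DS = 0) →
    (DX * S + S * DX + X * DS + DS * X = 0) → DX = 0 ∧ Dy = 0 ∧ DS = 0

/-- Primal nondegeneracy of a primal feasible `X`. -/
def PrimalNondeg (A : Fin m → Matrix (Fin n) (Fin n) ℝ)
    (X : Matrix (Fin n) (Fin n) ℝ) : Prop :=
  ∃ (r : ℕ) (M₁ : Matrix (Fin n) (Fin r) ℝ) (M₂ : Matrix (Fin n) (Fin (n - r)) ℝ),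
    M₁ᵀ * M₁ = 1 ∧ M₂ᵀ * M₂ = 1 ∧ M₁ᵀ * M₂ = 0 ∧
    LinearMap.range M₁.mulVecLin = LinearMap.range X.mulVecLin ∧
    LinearIndependent ℝ (fun i =>
      Matrix.fromBlocks (M₁ᵀ * (A i) * M₁) (M₁ᵀ * (A i) * M₂) (M₂ᵀ * (A i) * M₁) 0)

/-- Dual nondegeneracy of a dual feasible `(y, S)` (the condition involves only `S`). -/
def DualNondeg (A : Fin m → Matrix (Fin n) (Fin n) ℝ)
    (S : Matrix (Fin n) (Fin n) ℝ) : Prop :=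
  ∃ (k : ℕ) (N₁ : Matrix (Fin n) (Fin k) ℝ),
    N₁ᵀ * N₁ = 1 ∧ LinearMap.range N₁.mulVecLin = LinearMap.ker S.mulVecLin ∧
    ∀ W : Matrix (Fin k) (Fin k) ℝ, W.IsSymm →
      W ∈ Submodule.span ℝ (Set.range fun i => N₁ᵀ * (A i) * N₁)

/-- A central solution with parameter `μ` for the problems `(P_ε)` and `(D_ε)`. -/
def CentralSol (C Cbar : Matrix (Fin n) (Fin n) ℝ) (A : Fin m → Matrix (Fin n) (Fin n) ℝ)
    (b : Fin m → ℝ) (ε μ : ℝ) (X : Matrix (Fin n) (Fin n) ℝ) (y : Fin m → ℝ)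
    (S : Matrix (Fin n) (Fin n) ℝ) : Prop :=
  PrimalFeasible A b X ∧ DualFeasible C Cbar A ε y S ∧
    X * S = μ • (1 : Matrix (Fin n) (Fin n) ℝ)

/-- The Frobenius norm of a matrix. -/
def frobNorm {α β : Type*} [Fintype α] [Fintype β] (M : Matrix α β ℝ) : ℝ :=
  Real.sqrt (∑ i, ∑ j, (M i j) ^ 2)

/-- The spectral norm (induced 2-norm) of a square matrix. -/
def specNorm {N : ℕ} (M : Matrix (Fin N) (Fin N) ℝ) : ℝ :=
  ‖LinearMap.toContinuousLinearMap (Matrix.toEuclideanLin M)‖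

/-- The smallest eigenvalue of a symmetric matrix, via the Rayleigh quotient. -/
def lamMin {k : ℕ} (M : Matrix (Fin k) (Fin k) ℝ) : ℝ :=
  sInf {r : ℝ | ∃ x : Fin k → ℝ, (∑ i, (x i) ^ 2) = 1 ∧ r = x ⬝ᵥ M.mulVec x}

/-- `θ^μ`: the operator norm of the inverse of the Jacobian `J(X, y, S)` on
`S^n × ℝ^m × S^n`, characterized as the least constant `t ≥ 0` with
`‖(ΔX, Δy, ΔS)‖ ≤ t * ‖J(X,y,S)(ΔX, Δy, ΔS)‖` for all symmetric `ΔX`, `ΔS`. -/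
def thetaMu (A : Fin m → Matrix (Fin n) (Fin n) ℝ)
    (X S : Matrix (Fin n) (Fin n) ℝ) : ℝ :=
  sInf {t : ℝ | 0 ≤ t ∧ ∀ (DX DS : Matrix (Fin n) (Fin n) ℝ) (Dy : Fin m → ℝ),
    DX.IsSymm → DS.IsSymm →
    Real.sqrt (frobNorm DX ^ 2 + (∑ i, (Dy i) ^ 2) + frobNorm DS ^ 2) ≤
      t * Real.sqrt ((∑ i, (((A i) * DX).trace) ^ 2) +
        frobNorm ((∑ i, Dy i • A i) + DS) ^ 2 +
        frobNorm ((1 / 2 : ℝ) • (DX * S + S * DX + X * DS + DS * X)) ^ 2)}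

/-- A nonlinearity interval: a non-singleton open subinterval of `int(E)`, of maximal length,
on which `dim B(·)` and `dim N(·)` are constant while the optimal partition `π(·)` varies. -/
def IsNonlinearityInterval (C Cbar : Matrix (Fin n) (Fin n) ℝ)
    (A : Fin m → Matrix (Fin n) (Fin n) ℝ) (b : Fin m → ℝ) (I : Set ℝ) : Prop :=
  I ⊆ interior (Eset C Cbar A b) ∧ IsOpen I ∧ I.OrdConnected ∧
    (∃ a ∈ I, ∃ c ∈ I, a ≠ c) ∧
    (∀ ε ∈ I, ∀ ε' ∈ I, DimsMatch C Cbar A b ε ε') ∧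
    ¬ (∀ ε ∈ I, ∀ ε' ∈ I, SamePartition C Cbar A b ε ε') ∧
    ∀ I' : Set ℝ, I ⊆ I' → I' ⊆ interior (Eset C Cbar A b) → IsOpen I' → I'.OrdConnected →
      (∀ ε ∈ I', ∀ ε' ∈ I', DimsMatch C Cbar A b ε ε') → I' = I

end

open Matrix Set Filter Topology

/-- Openness of positivity on a subspace. -/
lemma quad_pos_eventually {n : ℕ} (W : Submodule ℝ (Fin n → ℝ)) (M : Matrix (Fin n) (Fin n) ℝ)
    (h : ∀ x ∈ W, x ≠ 0 → 0 < x ⬝ᵥ (M *ᵥ x)) :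
    ∀ᶠ M' in 𝓝 M, ∀ x ∈ W, x ≠ 0 → 0 < x ⬝ᵥ (M' *ᵥ x) := by
  have hK : IsCompact ((W : Set (Fin n → ℝ)) ∩ Metric.sphere 0 1) :=
    (isCompact_sphere 0 1).inter_left W.closed_of_finiteDimensional
  have key : ∀ᶠ M' in 𝓝 M, ∀ x ∈ ((W : Set (Fin n → ℝ)) ∩ Metric.sphere 0 1),
      0 < x ⬝ᵥ (M' *ᵥ x) := by
    apply hK.eventually_forall_of_forall_eventually
    intro y hy
    have hc : Continuous (fun z : Matrix (Fin n) (Fin n) ℝ × (Fin n → ℝ) =>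
      z.2 ⬝ᵥ (z.1 *ᵥ z.2)) := by fun_prop
    have hy0 : y ≠ 0 := by
      rintro rfl
      simpa using hy.2
    exact hc.continuousAt.eventually (lt_mem_nhds (h y hy.1 hy0))
  filter_upwards [key] with M' hM' x hx hx0
  have hn : 0 < ‖x‖ := norm_pos_iff.2 hx0
  have := hM' (‖x‖⁻¹ • x) ⟨W.smul_mem _ hx, by simp [norm_smul, hn.ne']⟩
  rw [mulVec_smul, dotProduct_smul, smul_dotProduct, smul_eq_mul, smul_eq_mul] at this
  have h2 : 0 < ‖x‖⁻¹ := inv_pos.2 hn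
  exact (mul_pos_iff_of_pos_left h2).1 ((mul_pos_iff_of_pos_left h2).1 this)

lemma psd_quad {n : ℕ} {X : Matrix (Fin n) (Fin n) ℝ} (hX : X.PosSemidef) (x : Fin n → ℝ) :
    0 ≤ x ⬝ᵥ (X *ᵥ x) := by
  simpa using hX.dotProduct_mulVec_nonneg x

lemma psd_quad_zero {n : ℕ} {X : Matrix (Fin n) (Fin n) ℝ} (hX : X.PosSemidef) (x : Fin n → ℝ) :
    x ⬝ᵥ (X *ᵥ x) = 0 ↔ X *ᵥ x = 0 := by
  simpa using hX.dotProduct_mulVec_zero_iff x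

/-- Lower semicontinuity of rank at a PSD matrix. -/
lemma rank_lsc {n : ℕ} {X : Matrix (Fin n) (Fin n) ℝ} (hX : X.PosSemidef) :
    ∀ᶠ M in 𝓝 X, X.rank ≤ M.rank := by
  have h := quad_pos_eventually (LinearMap.range X.mulVecLin) X (by
    rintro _ ⟨z, rfl⟩ hz
    simp only [mulVecLin_apply] at hz ⊢
    refine lt_of_le_of_ne (psd_quad hX _) (fun h0 => hz ?_)
    have h1 := (psd_quad_zero hX _).1 h0.symm
    have hs : Xᵀ = X := by simpa using hX.isHermitian.eq
    have h2 : (X *ᵥ z) ⬝ᵥ (X *ᵥ z) = 0 := by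
      conv_lhs => rw [dotProduct_mulVec, ← mulVec_transpose, hs, h1]
      simp
    exact dotProduct_self_eq_zero.1 h2)
  filter_upwards [h] with M hM
  have hd : Disjoint (LinearMap.range X.mulVecLin) (LinearMap.ker M.mulVecLin) := by
    rw [Submodule.disjoint_def]
    intro x hx hk
    by_contra hx0
    have := hM x hx hx0
    rw [LinearMap.mem_ker, mulVecLin_apply] at hk
    simp [hk] at this
  have h1 := Submodule.finrank_add_finrank_le_of_disjoint hd
  have h2 := LinearMap.finrank_range_add_finrank_ker M.mulVecLin
  unfold Matrix.rank
  omega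

lemma rank_le_of_ker {n : ℕ} {X Y : Matrix (Fin n) (Fin n) ℝ}
    (h : ∀ x, X *ᵥ x = 0 → Y *ᵥ x = 0) : Y.rank ≤ X.rank := by
  have hle : LinearMap.ker X.mulVecLin ≤ LinearMap.ker Y.mulVecLin := by
    intro x hx
    rw [LinearMap.mem_ker, mulVecLin_apply] at hx ⊢
    exact h x hx
  have h0 := Submodule.finrank_mono hle
  have h1 := LinearMap.finrank_range_add_finrank_ker X.mulVecLin
  have h2 := LinearMap.finrank_range_add_finrank_ker Y.mulVecLin
  unfold Matrix.rank
  omega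

lemma rank_add_le_aux {n : ℕ} (X Y : Matrix (Fin n) (Fin n) ℝ) :
    (X + Y).rank ≤ X.rank + Y.rank := by
  have hle : LinearMap.range (X + Y).mulVecLin ≤
      LinearMap.range X.mulVecLin ⊔ LinearMap.range Y.mulVecLin := by
    rintro _ ⟨z, rfl⟩
    rw [mulVecLin_add]
    exact Submodule.add_mem_sup ⟨z, rfl⟩ ⟨z, rfl⟩
  exact (Submodule.finrank_mono hle).trans
    (Submodule.finrank_add_le_finrank_add_finrank _ _)

open scoped MatrixOrder Matrix.Norms.L2Operator in
lemma psd_factor {n : ℕ} {X : Matrix (Fin n) (Fin n) ℝ} (hX : X.PosSemidef) :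
    ∃ B : Matrix (Fin n) (Fin n) ℝ, X = Bᵀ * B := by
  obtain ⟨B, hB⟩ := CStarAlgebra.nonneg_iff_eq_star_mul_self.1 (nonneg_iff_posSemidef.2 hX)
  exact ⟨B, by simpa [star_eq_conjTranspose] using hB⟩

lemma psd_trace_mul_nonneg {n : ℕ} {S X : Matrix (Fin n) (Fin n) ℝ} (hS : S.PosSemidef)
    (hX : X.PosSemidef) : 0 ≤ (S * X).trace := by
  obtain ⟨B, rfl⟩ := psd_factor hX
  rw [← mul_assoc, trace_mul_comm, ← mul_assoc]
  have := (hS.mul_mul_conjTranspose_same B).trace_nonneg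
  simpa using this

lemma psd_mul_eq_zero {n : ℕ} {S X : Matrix (Fin n) (Fin n) ℝ} (hS : S.PosSemidef)
    (hX : X.PosSemidef) (h : (S * X).trace = 0) : S * X = 0 := by
  obtain ⟨B, rfl⟩ := psd_factor hX
  obtain ⟨D, rfl⟩ := psd_factor hS
  have h1 : ((D * Bᵀ)ᴴ * (D * Bᵀ)).trace = 0 := by
    rw [← h, ← mul_assoc (Dᵀ * D), trace_mul_comm (Dᵀ * D * Bᵀ) B]
    simp [mul_assoc]
  rw [trace_conjTranspose_mul_self_eq_zero_iff] at h1
  calc Dᵀ * D * (Bᵀ * B) = Dᵀ * (D * Bᵀ) * B := by simp only [mul_assoc]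
    _ = 0 := by simp [h1]

lemma intrinsic_extend {E : Type*} [AddCommGroup E] [Module ℝ E] [TopologicalSpace E]
    [ContinuousAdd E] [ContinuousSMul ℝ E] {s : Set E} {x x' : E}
    (hx : x ∈ intrinsicInterior ℝ s) (hx' : x' ∈ s) :
    ∃ t : ℝ, 0 < t ∧ x + t • (x - x') ∈ s := by
  obtain ⟨z, hz, rfl⟩ := mem_intrinsicInterior.1 hx
  have hmem : ∀ t : ℝ, (z : E) + t • ((z : E) - x') ∈ affineSpan ℝ s := by
    intro t
    have := AffineMap.lineMap_mem (Q := affineSpan ℝ s) (-t) z.2 (subset_affineSpan ℝ s hx')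
    convert this using 1
    simp only [AffineMap.lineMap_apply, vsub_eq_sub, vadd_eq_add]
    rw [neg_smul, ← smul_neg, neg_sub, add_comm]
  let g : ℝ → affineSpan ℝ s := fun t => ⟨(z : E) + t • ((z : E) - x'), hmem t⟩
  have hg : Continuous g := by
    apply Continuous.subtype_mk
    fun_prop
  have hg0 : g 0 = z := by
    apply Subtype.ext
    simp [g]
  have hev : ∀ᶠ t in 𝓝 (0 : ℝ), g t ∈ ((↑) ⁻¹' s : Set (affineSpan ℝ s)) := by
    apply hg.continuousAt.eventually
    rw [hg0]
    exact mem_interior_iff_mem_nhds.1 hz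
  obtain ⟨t, ht, ht0⟩ := ((hev.filter_mono nhdsWithin_le_nhds).and
    (self_mem_nhdsWithin : Ioi (0 : ℝ) ∈ 𝓝[>] 0)).exists
  exact ⟨t, ht0, ht⟩

lemma nonneg_of_pert {a c : ℝ} (h : ∀ δ : ℝ, 0 < δ → 0 ≤ a + δ * c) : 0 ≤ a := by
  have ht : Tendsto (fun δ : ℝ => a + δ * c) (𝓝[>] 0) (𝓝 (a + 0 * c)) := by
    apply Tendsto.mono_left _ nhdsWithin_le_nhds
    apply Continuous.tendsto
    fun_prop
  rw [zero_mul, add_zero] at ht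
  exact ge_of_tendsto ht (by
    filter_upwards [self_mem_nhdsWithin] with δ hδ
    exact h δ hδ)

lemma quad_transpose {n : ℕ} (M : Matrix (Fin n) (Fin n) ℝ) (x : Fin n → ℝ) :
    x ⬝ᵥ (Mᵀ *ᵥ x) = x ⬝ᵥ (M *ᵥ x) := by
  rw [mulVec_transpose, dotProduct_comm, dotProduct_mulVec]

lemma trace_symm_mul {n : ℕ} {G : Matrix (Fin n) (Fin n) ℝ} (hG : G.IsSymm)
    (M : Matrix (Fin n) (Fin n) ℝ) :
    (G * ((1 / 2 : ℝ) • (M + Mᵀ))).trace = (G * M).trace := by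
  have h : (G * Mᵀ).trace = (G * M).trace := by
    rw [← trace_transpose, transpose_mul, transpose_transpose, hG.eq, trace_mul_comm]
  rw [Matrix.mul_smul, trace_smul, mul_add, trace_add, h, smul_eq_mul]
  ring

lemma traceMap_surj {n m : ℕ} {A : Fin m → Matrix (Fin n) (Fin n) ℝ}
    (hA : LinearIndependent ℝ A) (z : Fin m → ℝ) :
    ∃ M : Matrix (Fin n) (Fin n) ℝ, ∀ i, (A i * M).trace = z i := by
  let L : Matrix (Fin n) (Fin n) ℝ →ₗ[ℝ] (Fin m → ℝ) :=
    LinearMap.pi (fun i => (traceLinearMap (Fin n) ℝ ℝ).comp (LinearMap.mulLeft ℝ (A i)))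
  have hL : ∀ M i, L M i = (A i * M).trace := fun M i => rfl
  have htop : LinearMap.range L = ⊤ := by
    by_contra hne
    obtain ⟨f, hf0, hf⟩ := Submodule.exists_le_ker_of_lt_top _ (lt_top_iff_ne_top.2 hne)
    apply hf0
    have hfs : ∀ z, f z = ∑ i, z i * f (Pi.single i 1) := by
      intro z
      rw [LinearMap.pi_apply_eq_sum_univ f z]
      apply Finset.sum_congr rfl
      intro i _
      rw [smul_eq_mul]
      congr 2
      ext j
      simp [Pi.single_apply, eq_comm]
    have hz : ∑ i, f (Pi.single i 1) • A i = 0 := by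
      rw [Matrix.ext_iff_trace_mul_right]
      intro M
      have h1 : f (L M) = 0 := hf ⟨M, rfl⟩
      rw [hfs] at h1
      simp only [hL] at h1
      rw [Finset.sum_mul, trace_sum]
      simp only [zero_mul, trace_zero, Matrix.smul_mul, trace_smul, smul_eq_mul]
      rw [← h1]
      exact Finset.sum_congr rfl (fun i _ => mul_comm _ _)
    have hw := Fintype.linearIndependent_iff.1 hA _ hz
    refine LinearMap.ext fun z => ?_
    rw [hfs]
    simp [hw]
  obtain ⟨M, hM⟩ := (LinearMap.range_eq_top.1 htop) z
  exact ⟨M, fun i => by rw [← hL, hM]⟩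

/-- Not necessarily symmetric positive definite matrices. -/
def posCone (n : ℕ) : Set (Matrix (Fin n) (Fin n) ℝ) := {M | ∀ x, x ≠ 0 → 0 < x ⬝ᵥ (M *ᵥ x)}

/-- The constraint and objective map. -/
def dualMap {n m : ℕ} (G : Matrix (Fin n) (Fin n) ℝ) (A : Fin m → Matrix (Fin n) (Fin n) ℝ) :
    Matrix (Fin n) (Fin n) ℝ × ℝ →ₗ[ℝ] (Fin m → ℝ) × ℝ where
  toFun p := (fun i => (A i * p.1).trace, (G * p.1).trace + p.2)
  map_add' p q := by
    ext
    · simp [mul_add]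
    · simp [mul_add]; ring
  map_smul' r p := by
    ext
    · simp
    · simp [mul_add]

lemma posCone_open (n : ℕ) : IsOpen (posCone n) := by
  rw [isOpen_iff_mem_nhds]
  intro M hM
  have := quad_pos_eventually ⊤ M (fun x _ hx => hM x hx)
  filter_upwards [this] with M' hM' x hx
  exact hM' x trivial hx

lemma posCone_convex (n : ℕ) : Convex ℝ (posCone n) := by
  intro M hM M' hM' p q hp hq hpq x hx
  have h1 := hM x hx
  have h2 := hM' x hx
  rw [add_mulVec, dotProduct_add, smul_mulVec, smul_mulVec, dotProduct_smul, dotProduct_smul,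
    smul_eq_mul, smul_eq_mul]
  rcases hp.eq_or_lt with rfl | hp'
  · have : q = 1 := by linarith
    subst this
    linarith
  · have := mul_pos hp' h1
    have := mul_nonneg hq h2.le
    linarith

lemma image_open {n m : ℕ} {G : Matrix (Fin n) (Fin n) ℝ}
    {A : Fin m → Matrix (Fin n) (Fin n) ℝ} (hPo : IsOpenMap (dualMap G A)) : 
    IsOpen ((dualMap G A) '' (posCone n ×ˢ Ioi (0 : ℝ))) := by
  apply hPo
  exact (posCone_open n).prod isOpen_Ioi

lemma image_convex {n m : ℕ} {G : Matrix (Fin n) (Fin n) ℝ}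
    {A : Fin m → Matrix (Fin n) (Fin n) ℝ} : 
    Convex ℝ ((dualMap G A) '' (posCone n ×ˢ Ioi (0 : ℝ))) := by
  apply Convex.linear_image
  exact (posCone_convex n).prod (convex_Ioi 0)

lemma separation {n m : ℕ} {G : Matrix (Fin n) (Fin n) ℝ}
    {A : Fin m → Matrix (Fin n) (Fin n) ℝ} {b : Fin m → ℝ} (hG : G.IsSymm)
    (hAs : ∀ i, (A i).IsSymm) (hA : LinearIndependent ℝ A)
    {v : ℝ} (hv : ∀ X, PrimalFeasible A b X → v ≤ (G * X).trace) :
    ∃ (w : Fin m → ℝ) (τ : ℝ), ∀ M ∈ posCone n, ∀ s : ℝ, 0 < s →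
      ∑ i, (A i * M).trace * w i + ((G * M).trace + s) * τ < ∑ i, b i * w i + v * τ := by
  have hΦ : ∀ M s, dualMap G A (M, s) = (fun i => (A i * M).trace, (G * M).trace + s) :=
    fun M s => rfl
  have hPs : Function.Surjective (dualMap G A) := by
    rintro ⟨z, t⟩
    obtain ⟨M, hM⟩ := traceMap_surj hA z
    refine ⟨(M, t - (G * M).trace), ?_⟩
    rw [hΦ]
    simp [hM]
  have hPo : IsOpenMap (dualMap G A) := LinearMap.isOpenMap_of_finiteDimensional (dualMap G A) hPs
  have hnot : (b, v) ∉ (dualMap G A) '' (posCone n ×ˢ Ioi (0 : ℝ)) := by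
    rintro ⟨⟨M, s⟩, ⟨hM, hs⟩, hMs⟩
    rw [hΦ, Prod.mk.injEq] at hMs
    obtain ⟨h1, h2⟩ := hMs
    have hs' : 0 < s := hs
    have hsym : ((1 / 2 : ℝ) • (M + Mᵀ)).IsSymm := by
      simp [Matrix.IsSymm, add_comm]
    have hfeas : PrimalFeasible A b ((1 / 2 : ℝ) • (M + Mᵀ)) := by
      refine ⟨hsym, fun i => ?_, ?_⟩
      · rw [trace_symm_mul (hAs i)]
        exact congrFun h1 i
      · apply PosSemidef.of_dotProduct_mulVec_nonneg
        · simpa [Matrix.IsHermitian] using hsym.eq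
        · intro x
          by_cases hx : x = 0
          · simp [hx]
          have := hM x hx
          rw [star_trivial, smul_mulVec, dotProduct_smul, add_mulVec, dotProduct_add,
            quad_transpose, smul_eq_mul]
          linarith
    have := hv _ hfeas
    rw [trace_symm_mul hG] at this
    linarith
  obtain ⟨f, hf⟩ := geometric_hahn_banach_open_point image_convex (image_open hPo) hnot
  let w : Fin m → ℝ := fun i => f (Pi.single i 1, 0)
  let τ : ℝ := f (0, 1)
  have hfs : ∀ z t, f (z, t) = ∑ i, z i * w i + t * τ := by
    intro z t
    have e1 : (z, t) = (∑ i, z i • ((Pi.single i 1 : Fin m → ℝ), (0 : ℝ))) +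
        t • ((0 : Fin m → ℝ), (1 : ℝ)) := by
      ext j
      · simp [Prod.fst_sum, Finset.sum_apply, Pi.single_apply]
      · simp [Prod.snd_sum]
    rw [e1, map_add, map_sum, map_smul]
    simp only [map_smul, smul_eq_mul]
    rfl
  refine ⟨w, τ, ?_⟩
  intro M hM s hs
  have := hf _ ⟨(M, s), ⟨hM, hs⟩, rfl⟩
  rw [hΦ, hfs, hfs] at this
  exact this

lemma strong_duality {n m : ℕ} {G : Matrix (Fin n) (Fin n) ℝ}
    {A : Fin m → Matrix (Fin n) (Fin n) ℝ} {b : Fin m → ℝ} (hG : G.IsSymm)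
    (hAs : ∀ i, (A i).IsSymm) (hA : LinearIndependent ℝ A)
    {X₀ : Matrix (Fin n) (Fin n) ℝ} (hX₀ : PrimalFeasible A b X₀) (hX₀p : X₀.PosDef)
    {v : ℝ} (hv : ∀ X, PrimalFeasible A b X → v ≤ (G * X).trace) :
    ∃ (y : Fin m → ℝ) (S : Matrix (Fin n) (Fin n) ℝ),
      S.IsSymm ∧ (∑ i, y i • A i) + S = G ∧ S.PosSemidef ∧ v ≤ ∑ i, b i * y i := by
  obtain ⟨w, τ, hmain⟩ := separation hG hAs hA hv
  have hUsmul : ∀ M ∈ posCone n, ∀ r : ℝ, 0 < r → r • M ∈ posCone n := by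
    intro M hM r hr x hx
    rw [smul_mulVec, dotProduct_smul, smul_eq_mul]
    exact mul_pos hr (hM x hx)
  have hX₀U : X₀ ∈ posCone n := by
    intro x hx
    simpa using hX₀p.dotProduct_mulVec_pos hx
  have hτ : τ < 0 := by
    have h1 := hmain X₀ hX₀U 1 one_pos
    simp only [hX₀.2.1] at h1
    have h2 := hv X₀ hX₀
    by_contra hcon
    push Not at hcon
    have : v * τ ≤ ((G * X₀).trace + 1) * τ := mul_le_mul_of_nonneg_right (by linarith) hcon
    linarith
  obtain ⟨y, hyd⟩ : ∃ y : Fin m → ℝ, y = fun i => w i / (-τ) := ⟨_, rfl⟩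
  obtain ⟨S, hSd⟩ : ∃ S, S = G - ∑ i, y i • A i := ⟨_, rfl⟩
  have hSt : ∀ M, (S * M).trace = (G * M).trace - (∑ i, (A i * M).trace * w i) / (-τ) := by
    intro M
    simp only [hSd, hyd, sub_mul, trace_sub, Finset.sum_mul, trace_sum, Matrix.smul_mul, trace_smul,
      smul_eq_mul, Finset.sum_div]
    congr 1
    apply Finset.sum_congr rfl
    intro i _
    ring
  have hby : ∑ i, b i * y i = (∑ i, b i * w i) / (-τ) := by
    rw [Finset.sum_div]
    exact Finset.sum_congr rfl (fun i _ => by simp only [hyd]; ring)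
  have hineq : ∀ M ∈ posCone n, ∀ s : ℝ, 0 < s → v - ∑ i, b i * y i < (S * M).trace + s := by
    intro M hM s hs
    have h1 := hmain M hM s hs
    have hτ' : 0 < -τ := by linarith
    rw [hSt, hby]
    have : (∑ i, (A i * M).trace * w i) / (-τ) - ((G * M).trace + s)
        < (∑ i, b i * w i) / (-τ) - v := by
      rw [div_sub' hτ'.ne', div_sub' hτ'.ne', div_lt_div_iff_of_pos_right hτ']
      linarith
    linarith
  have hineq2 : ∀ M ∈ posCone n, ∀ r : ℝ, 0 < r → 0 ≤ r * (S * M).trace - (v - ∑ i, b i * y i) := by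
    intro M hM r hr
    apply nonneg_of_pert (c := 1)
    intro s hs
    have := hineq _ (hUsmul M hM r hr) s hs
    rw [Matrix.mul_smul, trace_smul, smul_eq_mul] at this
    linarith
  have htr : ∀ M ∈ posCone n, 0 ≤ (S * M).trace := by
    intro M hM
    apply nonneg_of_pert (c := -(v - ∑ i, b i * y i))
    intro δ hδ
    have := mul_nonneg hδ.le (hineq2 M hM δ⁻¹ (inv_pos.2 hδ))
    rw [mul_sub, ← mul_assoc, mul_inv_cancel₀ hδ.ne'] at this
    linarith
  have hSsym : S.IsSymm := by
    simp only [hSd, Matrix.IsSymm, transpose_sub, transpose_sum, transpose_smul, hG.eq]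
    congr 1
    exact Finset.sum_congr rfl (fun i _ => by rw [(hAs i).eq])
  refine ⟨y, S, hSsym, by simp [hSd], ?_, ?_⟩
  · apply PosSemidef.of_dotProduct_mulVec_nonneg
    · simpa [Matrix.IsHermitian] using hSsym.eq
    · intro x
      rw [star_trivial]
      apply nonneg_of_pert (c := S.trace)
      intro δ hδ
      have hMU : vecMulVec x x + δ • (1 : Matrix (Fin n) (Fin n) ℝ) ∈ posCone n := by
        intro z hz
        have h1 : 0 ≤ z ⬝ᵥ (vecMulVec x x *ᵥ z) := by
          have := psd_quad (posSemidef_vecMulVec_self_star x) z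
          simpa using this
        rw [add_mulVec, dotProduct_add, smul_mulVec, dotProduct_smul, one_mulVec, smul_eq_mul]
        have h2 : 0 < z ⬝ᵥ z := by
          have := dotProduct_star_self_pos_iff.2 hz
          simpa using this
        have := mul_pos hδ h2
        linarith
      have := htr _ hMU
      rw [mul_add, trace_add, Matrix.mul_smul, trace_smul, mul_one, smul_eq_mul, mul_vecMulVec,
        trace_vecMulVec, dotProduct_comm] at this
      exact this
  · have : 0 ≤ -(v - ∑ i, b i * y i) := by
      apply nonneg_of_pert (c := (S * X₀).trace)
      intro δ hδ
      have := hineq2 X₀ hX₀U δ hδ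
      linarith
    linarith

lemma primalOpt_convex {n m : ℕ} (C Cbar : Matrix (Fin n) (Fin n) ℝ)
    (A : Fin m → Matrix (Fin n) (Fin n) ℝ) (b : Fin m → ℝ) (ε : ℝ) :
    Convex ℝ (PrimalOpt C Cbar A b ε) := by
  rintro X ⟨⟨hX1, hX2, hX3⟩, hX4⟩ Y ⟨⟨hY1, hY2, hY3⟩, hY4⟩ p q hp hq hpq
  refine ⟨⟨?_, fun i => ?_, (hX3.smul hp).add (hY3.smul hq)⟩, fun X' hX' => ?_⟩
  · exact (hX1.smul p).add (hY1.smul q)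
  · rw [mul_add, trace_add, Matrix.mul_smul, Matrix.mul_smul, trace_smul, trace_smul, hX2, hY2,
      ← add_smul, hpq, one_smul]
  · rw [mul_add, trace_add, Matrix.mul_smul, Matrix.mul_smul, trace_smul, trace_smul, smul_eq_mul,
      smul_eq_mul]
    have h1 := mul_le_mul_of_nonneg_left (hX4 X' hX') hp
    have h2 := mul_le_mul_of_nonneg_left (hY4 X' hX') hq
    have h3 : ((C + ε • Cbar) * X').trace = p * ((C + ε • Cbar) * X').trace
        + q * ((C + ε • Cbar) * X').trace := by rw [← add_mul, hpq, one_mul]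
    rw [h3]
    linarith

lemma dualOpt_convex {n m : ℕ} (C Cbar : Matrix (Fin n) (Fin n) ℝ)
    (A : Fin m → Matrix (Fin n) (Fin n) ℝ) (b : Fin m → ℝ) (ε : ℝ) :
    Convex ℝ (DualOpt C Cbar A b ε) := by
  rintro ⟨y, S⟩ ⟨⟨hX1, hX2, hX3⟩, hX4⟩ ⟨z, T⟩ ⟨⟨hY1, hY2, hY3⟩, hY4⟩ p q hp hq hpq
  dsimp only at hX1 hX2 hX3 hX4 hY1 hY2 hY3 hY4
  refine ⟨⟨(hX1.smul p).add (hY1.smul q), ?_, (hX3.smul hp).add (hY3.smul hq)⟩,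
    fun y' S' h' => ?_⟩
  · have e : ∑ i, (p • y + q • z) i • A i = p • ∑ i, y i • A i + q • ∑ i, z i • A i := by
      rw [Finset.smul_sum, Finset.smul_sum, ← Finset.sum_add_distrib]
      apply Finset.sum_congr rfl
      intro i _
      simp [add_smul, smul_smul]
    change ∑ i, (p • y + q • z) i • A i + (p • S + q • T) = _
    rw [e]
    calc _ = p • (∑ i, y i • A i + S) + q • (∑ i, z i • A i + T) := by
          rw [smul_add, smul_add]; abel
      _ = _ := by rw [hX2, hY2, ← add_smul, hpq, one_smul]
  · have e : ∑ i, b i * (p • y + q • z) i = p * ∑ i, b i * y i + q * ∑ i, b i * z i := by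
      rw [Finset.mul_sum, Finset.mul_sum, ← Finset.sum_add_distrib]
      apply Finset.sum_congr rfl
      intro i _
      simp
      ring
    change _ ≤ ∑ i, b i * (p • y + q • z) i
    rw [e]
    have h1 := mul_le_mul_of_nonneg_left (hX4 y' S' h') hp
    have h2 := mul_le_mul_of_nonneg_left (hY4 y' S' h') hq
    have h3 : ∑ i, b i * y' i = p * ∑ i, b i * y' i + q * ∑ i, b i * y' i := by
      rw [← add_mul, hpq, one_mul]
    rw [h3]
    linarith

section
attribute [local instance] Matrix.normedAddCommGroup Matrix.normedSpace

lemma maxComp_exists {n m : ℕ} {C Cbar : Matrix (Fin n) (Fin n) ℝ}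
    {A : Fin m → Matrix (Fin n) (Fin n) ℝ} {b : Fin m → ℝ} {ε : ℝ}
    (hP : (PrimalOpt C Cbar A b ε).Nonempty) (hD : (DualOpt C Cbar A b ε).Nonempty) :
    ∃ X y S, MaxComp C Cbar A b ε X y S := by
  obtain ⟨X, hX⟩ := hP.intrinsicInterior (primalOpt_convex C Cbar A b ε)
  obtain ⟨⟨y, S⟩, hS⟩ := hD.intrinsicInterior (dualOpt_convex C Cbar A b ε)
  exact ⟨X, y, S, hX, hS⟩

end

/-- A psd matrix that can be extended beyond itself away from `Y` has smaller kernel. -/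
lemma rank_le_of_extend {n : ℕ} {X Y : Matrix (Fin n) (Fin n) ℝ} {t : ℝ} (ht : 0 < t)
    (hY : Y.PosSemidef) (h : (X + t • (X - Y)).PosSemidef) : Y.rank ≤ X.rank := by
  apply rank_le_of_ker
  intro x hx
  have h1 := psd_quad h x
  rw [add_mulVec, smul_mulVec, sub_mulVec, hx] at h1
  simp only [zero_sub, zero_add, smul_neg, dotProduct_neg, dotProduct_smul, smul_eq_mul] at h1
  have h2 := psd_quad hY x
  have h3 : x ⬝ᵥ (Y *ᵥ x) = 0 := by
    by_contra hne
    have : 0 < x ⬝ᵥ (Y *ᵥ x) := lt_of_le_of_ne h2 (Ne.symm hne)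
    have := mul_pos ht this
    linarith
  exact (psd_quad_zero hY x).1 h3

lemma maxComp_rank {n m : ℕ} {C Cbar : Matrix (Fin n) (Fin n) ℝ}
    {A : Fin m → Matrix (Fin n) (Fin n) ℝ} {b : Fin m → ℝ} {ε : ℝ}
    {X S X' S' : Matrix (Fin n) (Fin n) ℝ} {y y' : Fin m → ℝ}
    (h : MaxComp C Cbar A b ε X y S) (hX' : X' ∈ PrimalOpt C Cbar A b ε)
    (hS' : (y', S') ∈ DualOpt C Cbar A b ε) : X'.rank ≤ X.rank ∧ S'.rank ≤ S.rank := by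
  constructor
  · obtain ⟨t, ht, hm⟩ := intrinsic_extend h.1 hX'
    exact rank_le_of_extend ht hX'.1.2.2 hm.1.2.2
  · obtain ⟨t, ht, hm⟩ := intrinsic_extend h.2 hS'
    exact rank_le_of_extend ht hS'.1.2.2 hm.1.2.2

lemma opt_rank_sum {n m : ℕ} {C Cbar : Matrix (Fin n) (Fin n) ℝ}
    {A : Fin m → Matrix (Fin n) (Fin n) ℝ} {b : Fin m → ℝ} {ε : ℝ}
    (hSA : StandingAssumptions C Cbar A b)
    {X S : Matrix (Fin n) (Fin n) ℝ} {y : Fin m → ℝ}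
    (hX : X ∈ PrimalOpt C Cbar A b ε)
    (hS : (y, S) ∈ DualOpt C Cbar A b ε) : X.rank + S.rank ≤ n := by
  obtain ⟨hC, hCb, hAs, hA, X₀, -, -, hX₀, hX₀p, -, -⟩ := hSA
  obtain ⟨y', S', hS1, hS2, hS3, hv⟩ := strong_duality (hC.add (hCb.smul ε)) hAs hA hX₀ hX₀p hX.2
  have h1 := hS.2 y' S' ⟨hS1, hS2, hS3⟩
  have h2 : ((C + ε • Cbar) * X).trace = ∑ i, b i * y i + (S * X).trace := by
    have := hS.1.2.1
    dsimp only at this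
    rw [← this, add_mul, trace_add, Finset.sum_mul, trace_sum]
    congr 1
    apply Finset.sum_congr rfl
    intro i _
    rw [Matrix.smul_mul, trace_smul, hX.1.2.1, smul_eq_mul, mul_comm]
  have h3 := psd_trace_mul_nonneg hS.1.2.2 hX.1.2.2
  dsimp only at h1 h3
  have h4 := psd_mul_eq_zero hS.1.2.2 hX.1.2.2 (by dsimp only; linarith)
  have h5 := rank_add_rank_le_card_of_mul_eq_zero h4
  simp only [Fintype.card_fin] at h5
  omega

lemma strictComp_rank {n m : ℕ} {C Cbar : Matrix (Fin n) (Fin n) ℝ}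
    {A : Fin m → Matrix (Fin n) (Fin n) ℝ} {b : Fin m → ℝ} {ε : ℝ}
    (hSA : StandingAssumptions C Cbar A b)
    {X S : Matrix (Fin n) (Fin n) ℝ} {y : Fin m → ℝ}
    (h : MaxComp C Cbar A b ε X y S) (hs : HasStrictComp C Cbar A b ε) :
    X.rank + S.rank = n := by
  obtain ⟨X', y', S', hX', hS', hp⟩ := hs
  obtain ⟨h1, h2⟩ := maxComp_rank h hX' hS'
  have h3 := opt_rank_sum hSA (intrinsicInterior_subset h.1) (intrinsicInterior_subset h.2)
  have h4 := rank_add_le_aux X' S'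
  have h5 := rank_of_isUnit _ hp.isUnit
  simp only [Fintype.card_fin] at h5
  omega

/-- at a boundary point of a nonlinearity interval with strict complementarity,
if optimal solutions converge to a maximally complementary solution, then strict
complementarity fails at the boundary point and the ranks change there. -/
theorem stmt6 {n m : ℕ} (C Cbar : Matrix (Fin n) (Fin n) ℝ)
    (A : Fin m → Matrix (Fin n) (Fin n) ℝ) (b : Fin m → ℝ)
    (hSA : StandingAssumptions C Cbar A b)
    (I : Set ℝ) (hI : IsNonlinearityInterval C Cbar A b I)
    (hIsc : ∀ ε ∈ I, HasStrictComp C Cbar A b ε)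
    (εbar : ℝ) (hεbar : εbar ∈ interior (Eset C Cbar A b)) (hfr : εbar ∈ frontier I)
    (Xs Ss : Matrix (Fin n) (Fin n) ℝ) (ys : Fin m → ℝ)
    (hmc : MaxComp C Cbar A b εbar Xs ys Ss)
    (hconv : ∀ εk : ℕ → ℝ, (∀ k, εk k ∈ interior (Eset C Cbar A b)) →
      Filter.Tendsto εk Filter.atTop (nhds εbar) →
      ∃ (Xk : ℕ → Matrix (Fin n) (Fin n) ℝ) (yk : ℕ → Fin m → ℝ)
          (Sk : ℕ → Matrix (Fin n) (Fin n) ℝ),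
        (∀ k, Xk k ∈ PrimalOpt C Cbar A b (εk k) ∧ (yk k, Sk k) ∈ DualOpt C Cbar A b (εk k)) ∧
        Filter.Tendsto (fun k => (Xk k, yk k, Sk k)) Filter.atTop (nhds (Xs, ys, Ss))) :
    ¬ HasStrictComp C Cbar A b εbar ∧
      ∀ ξ : ℝ, 0 < ξ → ∀ ε ∈ Set.Ioo (εbar - ξ) (εbar + ξ) ∩ I,
        ∀ (X S : Matrix (Fin n) (Fin n) ℝ) (y : Fin m → ℝ), MaxComp C Cbar A b ε X y S →
          Module.finrank ℝ (LinearMap.range X.mulVecLin) ≠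
              Module.finrank ℝ (LinearMap.range Xs.mulVecLin) ∨
            Module.finrank ℝ (LinearMap.range S.mulVecLin) ≠
              Module.finrank ℝ (LinearMap.range Ss.mulVecLin) := by
  obtain ⟨hIE, hIo, hIc, -, hId, -, hImax⟩ := hI
  have hXs := intrinsicInterior_subset hmc.1
  have hSs := intrinsicInterior_subset hmc.2
  -- the rank sum at the boundary point cannot be full
  have key : Xs.rank + Ss.rank ≠ n := by
    intro hn
    obtain ⟨δ₀, hδ₀, hball⟩ := Metric.isOpen_iff.1 isOpen_interior εbar hεbar
    have hloc : ∃ δ : ℝ, 0 < δ ∧ δ ≤ δ₀ ∧ ∀ ε ∈ Metric.ball εbar δ, ∀ X y S,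
        MaxComp C Cbar A b ε X y S → X.rank = Xs.rank ∧ S.rank = Ss.rank := by
      by_contra hcon
      push Not at hcon
      have hc : ∀ k : ℕ, ∃ ε ∈ Metric.ball εbar (min δ₀ (1 / ((k : ℝ) + 1))), ∃ X y S,
          MaxComp C Cbar A b ε X y S ∧ (X.rank = Xs.rank → S.rank ≠ Ss.rank) := fun k =>
        hcon _ (lt_min hδ₀ Nat.one_div_pos_of_nat) (min_le_left _ _)
      choose εk hεk X y S hm hne using hc
      obtain ⟨Xk, yk, Sk, hopt, hlim⟩ := hconv εk
        (fun k => hball (Metric.ball_subset_ball (min_le_left _ _) (hεk k))) (by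
          rw [tendsto_iff_dist_tendsto_zero]
          exact squeeze_zero (fun k => dist_nonneg)
            (fun k => (lt_of_lt_of_le (hεk k) (min_le_right _ _)).le)
            tendsto_one_div_add_atTop_nhds_zero_nat)
      have hl1 : Filter.Tendsto Xk Filter.atTop (nhds Xs) :=
        (continuous_fst.tendsto _).comp hlim
      have hl2 : Filter.Tendsto Sk Filter.atTop (nhds Ss) :=
        ((continuous_snd.comp continuous_snd).tendsto _).comp hlim
      obtain ⟨k, hk1, hk2⟩ := ((hl1.eventually (rank_lsc hXs.1.2.2)).and
        (hl2.eventually (rank_lsc hSs.1.2.2))).exists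
      obtain ⟨h1, h2⟩ := maxComp_rank (hm k) (hopt k).1 (hopt k).2
      have h3 := opt_rank_sum hSA (intrinsicInterior_subset (hm k).1)
        (intrinsicInterior_subset (hm k).2)
      have hk2' : Ss.rank ≤ (Sk k).rank := hk2
      exact hne k (by omega) (by omega)
    obtain ⟨δ, hδ, hδδ, hdim⟩ := hloc
    obtain ⟨ε₀, hε₀b, hε₀I⟩ := mem_closure_iff_nhds.1 hfr.1 _ (Metric.ball_mem_nhds εbar hδ)
    obtain ⟨X₁, y₁, S₁, hX₁, hS₁, -⟩ := hIsc ε₀ hε₀I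
    obtain ⟨X₀, y₀, S₀, hm₀⟩ := maxComp_exists ⟨X₁, hX₁⟩ ⟨(y₁, S₁), hS₁⟩
    have hd₀ := hdim ε₀ hε₀b _ _ _ hm₀
    have hall : ∀ ε ∈ I ∪ Metric.ball εbar δ, ∀ X y S,
        MaxComp C Cbar A b ε X y S → X.rank = Xs.rank ∧ S.rank = Ss.rank := by
      rintro ε (hε | hε) X y S hm
      · have := hId ε hε ε₀ hε₀I _ _ _ _ _ _ hm hm₀
        exact ⟨this.1.trans hd₀.1, this.2.trans hd₀.2⟩
      · exact hdim ε hε _ _ _ hm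
    have hord : (I ∪ Metric.ball εbar δ).OrdConnected := by
      apply IsPreconnected.ordConnected
      exact IsPreconnected.union ε₀ hε₀I hε₀b hIc.isPreconnected
        (convex_ball εbar δ).isPreconnected
    have heq := hImax (I ∪ Metric.ball εbar δ) subset_union_left
      (union_subset hIE ((Metric.ball_subset_ball hδδ).trans hball))
      (hIo.union Metric.isOpen_ball) hord (by
        intro ε hε ε' hε' X y S X' y' S' hm hm'
        have h1 := hall ε hε _ _ _ hm
        have h2 := hall ε' hε' _ _ _ hm'
        exact ⟨h1.1.trans h2.1.symm, h1.2.trans h2.2.symm⟩)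
    have hin : εbar ∈ I := by
      rw [← heq]
      exact Or.inr (Metric.mem_ball_self hδ)
    rw [hIo.frontier_eq] at hfr
    exact hfr.2 hin
  refine ⟨fun hs => key (strictComp_rank hSA hmc hs), ?_⟩
  intro ξ _ ε hε X S y hm
  by_contra hcon
  push Not at hcon
  have h1 := strictComp_rank hSA hm (hIsc ε hε.2)
  have e1 : X.rank = Xs.rank := hcon.1
  have e2 : S.rank = Ss.rank := hcon.2
  exact key (by omega)
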